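/- Let f : {0,1}ⁿ → {0,1}ⁿ, let Q : ℝⁿ → [0,1]ⁿ be a continuous conversion of f, let γ₁,…,γ_{2n} > 0 be arbitrary positive reals, and let s ∈ {0,1}ⁿ be a fixed point of f. Define P^s = { x ∈ [x⁻, x⁺]^{2n} : for every i ∈ [n], xᵢ > 1 and x_{n+i} > 2/3 if sᵢ = 1, and xᵢ < −1 and x_{n+i} < −2/3 if sᵢ = 0 }. Then P^s is forward invariant: every solution x of D₂(f,γ,Q) with x(0) ∈ P^s satisfies x(t) ∈ P^s for all t ≥ 0. In particular no signature coordinate xᵢ (i ∈ [n]) ever changes sign along such a solution. -/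

import Mathlib

/-- The cubic `g(x) = 3x - x³ - 3`. -/
noncomputable def gcub (x : ℝ) : ℝ := 3 * x - x ^ 3 - 3

/-- The piecewise linear function `L`: `0` for `x ≤ -1`, `(x+1)/2` for
`-1 < x < 1`, and `1` for `x ≥ 1`. -/
noncomputable def Lpl (x : ℝ) : ℝ := if x ≤ -1 then 0 else if x < 1 then (x + 1) / 2 else 1

/-- `W^s ⊆ ℝⁿ`: the set of `x` with `xᵢ < -1` when `sᵢ = 0` and `xᵢ > 1`
when `sᵢ = 1`. -/
def Wset (n : ℕ) (s : Fin n → Bool) : Set (Fin n → ℝ) :=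
  {x | ∀ i, if s i then 1 < x i else x i < -1}

/-- `Q : ℝⁿ → [0,1]ⁿ` is a continuous conversion of the Boolean map `f`. -/
def IsConversion (n : ℕ) (f : (Fin n → Bool) → Fin n → Bool)
    (Q : (Fin n → ℝ) → Fin n → ℝ) : Prop :=
  Continuous Q ∧ (∀ x i, Q x i ∈ Set.Icc (0 : ℝ) 1) ∧
  ∀ s : Fin n → Bool, ∀ x ∈ Wset n s, ∀ i, Q x i = if f s i then 1 else 0

/-- `(x, y) : [0,∞) → ℝⁿ × ℝⁿ` is a solution of the system `D₂(f, γ, Q)`: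
`ẋᵢ = γᵢ (g(xᵢ) + 6 L(yᵢ))` and `ẏᵢ = γ'ᵢ (g(yᵢ) + 6 Qᵢ(x))`, where the
`xᵢ` are the signature variables and the `yᵢ = x_{n+i}` the signaling ones. -/
def IsSolD2 (n : ℕ) (γ γ' : Fin n → ℝ) (Q : (Fin n → ℝ) → Fin n → ℝ)
    (x y : ℝ → Fin n → ℝ) : Prop :=
  ∀ i : Fin n, ∀ t : ℝ, 0 ≤ t →
    HasDerivAt (fun u => x u i) (γ i * (gcub (x t i) + 6 * Lpl (y t i))) t ∧
    HasDerivAt (fun u => y u i) (γ' i * (gcub (y t i) + 6 * Q (x t) i)) t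

/-- The discretization `S(x)ᵢ = 1` iff `xᵢ > 0`. -/
noncomputable def Sdisc (n : ℕ) (x : Fin n → ℝ) : Fin n → Bool := fun i => decide (0 < x i)

/-- The switching set: some signature coordinate vanishes. -/
def Bzero (n : ℕ) : Set (Fin n → ℝ) := {x | ∃ i, x i = 0}

/-- `σ : ℕ → {0,1}ⁿ` is the Boolean itinerary of the trajectory `x : ℝ → P`
under the discretization `S` (with switching set `B`): there is a finite or
infinite strictly increasing sequence of switching times `t 0 = 0 < t 1 < ⋯`
(indices `< K`, tending to `∞` if `K = ⊤`) such that the trajectory stays off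
`B` except possibly at switching times, `S ∘ x` is constant equal to `σ k` on
the `k`-th interval (including `u = 0` for `k = 0`), the values on consecutive
intervals differ, and `σ` is extended constantly after the last interval.
This encodes the transversality property together with the itinerary. -/
def IsItinerary {P : Type*} (n : ℕ) (x : ℝ → P) (S : P → Fin n → Bool)
    (B : Set P) (σ : ℕ → Fin n → Bool) : Prop :=
  ∃ (K : ℕ∞) (t : ℕ → ℝ), 1 ≤ K ∧ t 0 = 0 ∧
    (∀ k : ℕ, ((k : ℕ∞) + 1) < K → t k < t (k + 1)) ∧
    (K = ⊤ → Filter.Tendsto t Filter.atTop Filter.atTop) ∧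
    (∀ u : ℝ, 0 ≤ u → (∀ k : ℕ, 1 ≤ k → (k : ℕ∞) < K → u ≠ t k) → x u ∉ B) ∧
    (∀ k : ℕ, (k : ℕ∞) < K → ∀ u : ℝ,
      (t k < u ∨ (k = 0 ∧ u = 0)) → (∀ _ : ((k : ℕ∞) + 1) < K, u < t (k + 1)) →
      S (x u) = σ k) ∧
    (∀ k : ℕ, ((k : ℕ∞) + 1) < K → σ (k + 1) ≠ σ k) ∧
    (∀ τ : ℕ, K ≤ (τ : ℕ∞) + 1 → σ (τ + 1) = σ τ)

open Set Filter Topology in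
lemma aux_upper (φ φ' : ℝ → ℝ) (c : ℝ) (hd : ∀ t, 0 ≤ t → HasDerivAt φ (φ' t) t)
    (h0 : φ 0 ≤ c) (h : ∀ t, 0 ≤ t → c < φ t → φ' t ≤ 0) : ∀ t, 0 ≤ t → φ t ≤ c := by
  intro t ht
  have key : ∀ ε : ℝ, 0 < ε → φ t ≤ c + ε * (1 + t) := by
    intro ε hε
    refine image_le_of_deriv_right_lt_deriv_boundary (f := φ) (f' := φ') (a := 0) (b := t)
      (B := fun u => c + ε * (1 + u)) (B' := fun _ => ε)
      (fun u hu => (hd u hu.1).continuousAt.continuousWithinAt)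
      (fun u hu => (hd u hu.1).hasDerivWithinAt) (by linarith) ?_ ?_ ⟨ht, le_refl t⟩
    · intro u
      simpa using (((hasDerivAt_id u).const_add 1).const_mul ε).const_add c
    · intro u hu heq
      have : 0 < ε * (1 + u) := mul_pos hε (by linarith [hu.1])
      have := h u hu.1 (by rw [heq]; linarith)
      linarith
  refine le_of_forall_pos_le_add fun δ hδ => ?_
  have := key (δ / (1 + t)) (by positivity)
  rwa [div_mul_cancel₀ _ (by positivity)] at this

open Set Filter Topology in
lemma aux_strict (φ : ℝ → ℝ) (c d T : ℝ) (hT : 0 < T) (hd : HasDerivAt φ d T)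
    (h : ∀ t, 0 ≤ t → t < T → c < φ t) (hpos : φ T = c → 0 < d) : c < φ T := by
  have hev : ∀ᶠ t in 𝓝[<] T, c < φ t := by
    filter_upwards [Ioo_mem_nhdsLT hT] with t ht using h t ht.1.le ht.2
  have hge : c ≤ φ T :=
    ge_of_tendsto (hd.continuousAt.tendsto.mono_left nhdsWithin_le_nhds) (hev.mono fun _ h => h.le)
  rcases hge.lt_or_eq with h1 | h1
  · exact h1
  · have hdp := hpos h1.symm
    have h2 := (hasDerivAt_iff_tendsto_slope.1 hd).mono_left (nhdsWithin_mono T (s := Iio T) (fun a ha => ne_of_lt ha))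
    have h3 := h2.eventually (lt_mem_nhds hdp)
    obtain ⟨t, ht1, ht2, ht3⟩ := (h3.and (hev.and self_mem_nhdsWithin)).exists
    rw [slope_def_field] at ht1
    have ht3 : t < T := ht3
    have : (φ t - φ T) / (t - T) ≤ 0 := div_nonpos_of_nonneg_of_nonpos (by linarith) (by linarith)
    linarith

open Set Filter Topology in
lemma aux_ge (φ : ℝ → ℝ) (c T : ℝ) (hT : 0 < T) (hd : ContinuousAt φ T)
    (h : ∀ t, 0 ≤ t → t < T → c < φ t) : c ≤ φ T := by
  have hev : ∀ᶠ t in 𝓝[<] T, c < φ t := by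
    filter_upwards [Ioo_mem_nhdsLT hT] with t ht using h t ht.1.le ht.2
  exact ge_of_tendsto (hd.tendsto.mono_left nhdsWithin_le_nhds) (hev.mono fun _ h => h.le)

lemma aux_L (z : ℝ) : 0 ≤ Lpl z ∧ Lpl z ≤ 1 := by
  unfold Lpl; split_ifs <;> constructor <;> linarith

lemma aux_L1 (z : ℝ) (h : 2 / 3 ≤ z) : 1 / 2 ≤ Lpl z := by
  unfold Lpl; split_ifs <;> linarith

lemma aux_L2 (z : ℝ) (h : 2 / 3 ≤ -z) : Lpl z ≤ 1 / 2 := by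
  unfold Lpl; split_ifs <;> linarith

lemma aux_xm (xm : ℝ) (h : gcub xm = 0) : xm < -2 := by
  unfold gcub at h
  by_contra hc
  nlinarith [mul_nonneg (sq_nonneg (xm - 1)) (by linarith : 0 ≤ xm + 2)]

lemma aux_g (xm z : ℝ) (h : gcub xm = 0) (hz : z < xm) : 0 < gcub z := by
  have h2 := aux_xm xm h
  unfold gcub at *
  have : 0 < z ^ 2 + z * xm + xm ^ 2 - 3 := by nlinarith
  nlinarith [mul_pos (sub_pos.2 hz) this]

lemma aux_box (φ p : ℝ → ℝ) (r xm : ℝ) (hr : 0 < r) (hxm : gcub xm = 0)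
    (hp : ∀ t, 0 ≤ t → 0 ≤ p t ∧ p t ≤ 1)
    (hd : ∀ t, 0 ≤ t → HasDerivAt φ (r * (gcub (φ t) + 6 * p t)) t)
    (h0 : φ 0 ∈ Set.Icc xm (-xm)) : ∀ t, 0 ≤ t → φ t ∈ Set.Icc xm (-xm) := by
  intro t ht
  constructor
  · have := aux_upper (fun u => - φ u) _ (-xm) (fun t ht => (hd t ht).neg) (by linarith [h0.1])
      (fun u hu hlt => by
        have := aux_g xm (φ u) hxm (by linarith)
        have := mul_pos hr (by linarith [(hp u hu).1] : 0 < gcub (φ u) + 6 * p u)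
        linarith) t ht
    linarith
  · refine aux_upper φ _ (-xm) hd h0.2 (fun u hu hlt => ?_) t ht
    have := aux_g xm (-φ u) hxm (by linarith)
    have : gcub (φ u) + 6 * p u ≤ 0 := by
      unfold gcub at *
      nlinarith [(hp u hu).2]
    exact mul_nonpos_of_nonneg_of_nonpos hr.le this

lemma aux_ind (G : ℝ → Prop) (h : ∀ T, 0 ≤ T → (∀ t, 0 ≤ t → t < T → G t) → G T)
    (ho : ∀ T, 0 ≤ T → G T → ∀ᶠ t in nhds T, G t) : ∀ t, 0 ≤ t → G t := by
  by_contra! hc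
  obtain ⟨t0, ht0, hG⟩ := hc
  set S : Set ℝ := {t | 0 ≤ t ∧ ¬ G t} with hS
  have hne : S.Nonempty := ⟨t0, ht0, hG⟩
  have hbd : BddBelow S := ⟨0, fun t ht => ht.1⟩
  have hT : 0 ≤ sInf S := le_csInf hne fun t ht => ht.1
  have hlt : ∀ t, 0 ≤ t → t < sInf S → G t := by
    intro t ht h1
    by_contra h2
    exact absurd (csInf_le hbd (show t ∈ S from ⟨ht, h2⟩)) (not_le.2 h1)
  have hGT := h _ hT hlt
  obtain ⟨ε, hε, hb⟩ := Metric.eventually_nhds_iff.1 (ho _ hT hGT)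
  obtain ⟨u, hu, hu2⟩ := exists_lt_of_csInf_lt hne (show sInf S < sInf S + ε by linarith)
  refine hu.2 (hb ?_)
  have := csInf_le hbd hu
  rw [Real.dist_eq, abs_lt]; constructor <;> linarith

/-- the fixed-point 'warm-up' case of the main Theorem: if `s`
is a fixed point of `f`, then the region `P^s` (where for each `i ∈ [n]` the
signature variable is beyond `±1` and the signaling variable beyond `±2/3`,
on the side prescribed by `sᵢ`, all within `[x⁻, x⁺]`) is forward invariant
for `D₂(f, γ, Q)`, for arbitrary positive rates `γ, γ'`; in particular no
signature coordinate ever changes sign. -/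
theorem stmt_12 (n : ℕ) (f : (Fin n → Bool) → Fin n → Bool)
    (Q : (Fin n → ℝ) → Fin n → ℝ) (hQ : IsConversion n f Q)
    (γ γ' : Fin n → ℝ) (hγ : ∀ i, 0 < γ i) (hγ' : ∀ i, 0 < γ' i)
    (s : Fin n → Bool) (hs : f s = s)
    (xm : ℝ) (hxm : gcub xm = 0) (hxmu : ∀ z, gcub z = 0 → z = xm)
    (x y : ℝ → Fin n → ℝ) (hsol : IsSolD2 n γ γ' Q x y)
    (h0 : ∀ i, x 0 i ∈ Set.Icc xm (-xm) ∧ y 0 i ∈ Set.Icc xm (-xm) ∧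
      (if s i then 1 < x 0 i ∧ 2 / 3 < y 0 i
       else x 0 i < -1 ∧ y 0 i < -(2 / 3))) :
    (∀ t : ℝ, 0 ≤ t → ∀ i,
      x t i ∈ Set.Icc xm (-xm) ∧ y t i ∈ Set.Icc xm (-xm) ∧
      (if s i then 1 < x t i ∧ 2 / 3 < y t i
       else x t i < -1 ∧ y t i < -(2 / 3))) ∧
    (∀ t : ℝ, 0 ≤ t → ∀ i, x t i ≠ 0) := by
  obtain ⟨-, hQ01, hQf⟩ := hQ
  have hbx : ∀ i t, 0 ≤ t → x t i ∈ Set.Icc xm (-xm) := fun i =>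
    aux_box (fun u => x u i) (fun t => Lpl (y t i)) (γ i) xm (hγ i) hxm (fun t _ => aux_L _)
      (fun t ht => (hsol i t ht).1) (h0 i).1
  have hby : ∀ i t, 0 ≤ t → y t i ∈ Set.Icc xm (-xm) := fun i =>
    aux_box (fun u => y u i) (fun t => Q (x t) i) (γ' i) xm (hγ' i) hxm (fun t _ => hQ01 _ _)
      (fun t ht => (hsol i t ht).2) (h0 i).2.1
  have hG : ∀ t, 0 ≤ t → ∀ i, if s i then 1 < x t i ∧ 2 / 3 < y t i
       else x t i < -1 ∧ y t i < -(2 / 3) := by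
    refine aux_ind _ ?_ ?_
    · intro T hT hlt
      rcases hT.eq_or_lt with h | hT0
      · subst h; exact fun i => (h0 i).2.2
      have hx : x T ∈ Wset n s := by
        intro i
        have hdx := (hsol i T hT).1
        have hdy := (hsol i T hT).2
        by_cases hsi : s i = true
        · simp only [hsi, if_true]
          have hy := aux_ge (fun u => y u i) (2 / 3) T hT0 hdy.continuousAt
            (fun t ht h => by have := hlt t ht h i; simp only [hsi, if_true] at this; exact this.2)
          refine aux_strict (fun u => x u i) 1 _ T hT0 hdx
            (fun t ht h => by have := hlt t ht h i; simp only [hsi, if_true] at this; exact this.1)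
            (fun he => mul_pos (hγ i) ?_)
          have he : x T i = 1 := he
          have := aux_L1 _ hy
          rw [he]; unfold gcub; linarith
        · simp only [hsi]
          have hy := aux_ge (fun u => - y u i) (2 / 3) T hT0 hdy.neg.continuousAt
            (fun t ht h => by
              have := hlt t ht h i; simp [hsi] at this; linarith [this.2])
          have := aux_strict (fun u => - x u i) 1 _ T hT0 hdx.neg
            (fun t ht h => by
              have := hlt t ht h i; simp [hsi] at this; linarith [this.1])
            (fun he => by
              have he : x T i = -1 := by linarith
              have := aux_L2 _ hy
              rw [← mul_neg]
              refine mul_pos (hγ i) ?_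
              rw [he]; unfold gcub; linarith)
          simp
          linarith
      intro i
      have hxi := hx i
      have hq := hQf s _ hx i
      rw [hs] at hq
      have hdy := (hsol i T hT).2
      by_cases hsi : s i = true
      · simp only [hsi, if_true] at hxi hq ⊢
        refine ⟨hxi, ?_⟩
        refine aux_strict (fun u => y u i) (2 / 3) _ T hT0 hdy
            (fun t ht h => by have := hlt t ht h i; simp only [hsi, if_true] at this; exact this.2)
            (fun he => mul_pos (hγ' i) ?_)
        have he : y T i = 2 / 3 := he
        rw [he, hq]; unfold gcub; norm_num
      · simp [hsi] at hxi hq ⊢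
        refine ⟨hxi, ?_⟩
        have := aux_strict (fun u => - y u i) (2 / 3) _ T hT0 hdy.neg
            (fun t ht h => by
              have := hlt t ht h i; simp [hsi] at this; linarith [this.2])
            (fun he => by
              have he : y T i = -(2 / 3) := by linarith
              rw [← mul_neg]
              refine mul_pos (hγ' i) ?_
              rw [he, hq]; unfold gcub; norm_num)
        linarith
    · intro T hT hg
      rw [Filter.eventually_all]
      intro i
      have hgi := hg i
      have cx := (hsol i T hT).1.continuousAt
      have cy := (hsol i T hT).2.continuousAt
      by_cases hsi : s i = true
      · simp only [hsi, if_true] at hgi ⊢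
        exact (cx.eventually (lt_mem_nhds hgi.1)).and (cy.eventually (lt_mem_nhds hgi.2))
      · simp only [hsi] at hgi ⊢
        exact (cx.eventually (gt_mem_nhds hgi.1)).and (cy.eventually (gt_mem_nhds hgi.2))
  refine ⟨fun t ht i => ⟨hbx i t ht, hby i t ht, hG t ht i⟩, fun t ht i => ?_⟩
  have := hG t ht i
  split_ifs at this
  · exact fun h => by linarith [this.1]
  · exact fun h => by linarith [this.1]
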